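/- Chain rule for the geometric Rényi divergence: Let α ∈ (1,2], let E, F : M_d(ℂ) → M_{d'}(ℂ) be quantum channels, and let ρ, σ be states on ℂ^d. Then 𝐷̂_α(E(ρ)‖F(σ)) ≤ 𝐷̂_α(ρ‖σ) + 𝐷̂_α(E‖F) in the extended reals, where 𝐷̂_α(E‖F) denotes the channel divergence induced by 𝐷̂_α. -/

import Mathlib

open scoped Kronecker ComplexOrder

noncomputable section

namespace QCD

attribute [local instance] Classical.propDecidable

variable {n m : Type} [Fintype n] [DecidableEq n] [Fintype m] [DecidableEq m]

/-- The real part of the trace of a complex matrix. -/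
def rtr (A : Matrix n n ℂ) : ℝ := (A.trace).re

/-- A quantum state: positive semidefinite with trace one. -/
def IsState (ρ : Matrix n n ℂ) : Prop := ρ.PosSemidef ∧ ρ.trace = 1

/-- Loewner order: `A ≤ B` iff `B - A` is positive semidefinite. -/
def loewnerLE (A B : Matrix n n ℂ) : Prop := (B - A).PosSemidef

/-- Support containment (for PSD matrices): `ker σ ⊆ ker ρ`. -/
def SuppLE (ρ σ : Matrix n n ℂ) : Prop := ∀ v : n → ℂ, σ.mulVec v = 0 → ρ.mulVec v = 0

/-- Functional calculus for Hermitian matrices (junk value `0` otherwise). -/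
def matFun (f : ℝ → ℝ) (A : Matrix n n ℂ) : Matrix n n ℂ :=
  if hA : A.IsHermitian then
    (hA.eigenvectorUnitary : Matrix n n ℂ) *
      Matrix.diagonal (fun i => (f (hA.eigenvalues i) : ℂ)) *
      (star (hA.eigenvectorUnitary : Matrix n n ℂ))
  else 0

/-- Matrix square root via functional calculus. -/
def msqrt (A : Matrix n n ℂ) : Matrix n n ℂ := matFun Real.sqrt A

/-- Matrix real power taken on the support (`0 ^ t := 0`). -/
def mpow (A : Matrix n n ℂ) (t : ℝ) : Matrix n n ℂ :=
  matFun (fun x => if x = 0 then 0 else x ^ t) A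

/-- Matrix base-2 logarithm on the support. -/
def mlog (A : Matrix n n ℂ) : Matrix n n ℂ := matFun (Real.logb 2) A

/-- Positive part of a Hermitian matrix. -/
def mposPart (A : Matrix n n ℂ) : Matrix n n ℂ := matFun (fun x => max x 0) A

/-- Trace norm. -/
def traceNorm (A : Matrix n m ℂ) : ℝ := rtr (msqrt (A.conjTranspose * A))

/-- Base-2 logarithm as an extended real (`⊥` on nonpositive input). -/
def elog (x : ℝ) : EReal := if x ≤ 0 then ⊥ else ((Real.logb 2 x : ℝ) : EReal)

/-- Base-2 logarithm of an extended real. -/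
def elogE (x : EReal) : EReal := if x = ⊤ then ⊤ else elog x.toReal

/-- `2 ^ x` for an extended real `x`. -/
def epow2 (x : EReal) : EReal :=
  if x = ⊤ then ⊤ else if x = ⊥ then 0 else ((((2:ℝ) ^ x.toReal : ℝ)) : EReal)

/-- Umegaki relative entropy (base 2), `⊤` if the support condition fails. -/
def relEntropy (ρ σ : Matrix n n ℂ) : EReal :=
  if SuppLE ρ σ then ((rtr (ρ * (mlog ρ - mlog σ)) : ℝ) : EReal) else ⊤

/-- Petz–Rényi divergence (base 2). -/
def petzRenyi (α : ℝ) (ρ σ : Matrix n n ℂ) : EReal :=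
  if 1 < α ∧ ¬ SuppLE ρ σ then ⊤
  else (((α - 1)⁻¹ : ℝ) : EReal) * elog (rtr (mpow ρ α * mpow σ (1 - α)))

/-- Geometric (maximal) Rényi divergence (base 2). -/
def geomRenyi (α : ℝ) (ρ σ : Matrix n n ℂ) : EReal :=
  if SuppLE ρ σ then
    (((α - 1)⁻¹ : ℝ) : EReal) *
      elog (rtr (σ * mpow (mpow σ (-(1/2 : ℝ)) * ρ * mpow σ (-(1/2 : ℝ))) α))
  else ⊤

/-- Max-relative entropy (base 2). -/
def dMax (ρ σ : Matrix n n ℂ) : EReal :=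
  sInf {x : EReal | ∃ lam : ℝ, x = (lam : EReal) ∧ loewnerLE ρ ((((2:ℝ) ^ lam : ℝ) : ℂ) • σ)}

/-- Uhlmann fidelity. -/
def fidelity (ρ σ : Matrix n n ℂ) : ℝ := (rtr (msqrt (msqrt σ * ρ * msqrt σ))) ^ 2

/-- Sine (purified) distance. -/
def sineDist (ρ σ : Matrix n n ℂ) : ℝ := Real.sqrt (1 - fidelity ρ σ)

/-- Smoothed max-relative entropy: smoothing over states in the sine-distance ball. -/
def dMaxSmooth (δ : ℝ) (ρ σ : Matrix n n ℂ) : EReal :=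
  ⨅ (ρ' : Matrix n n ℂ) (_ : IsState ρ' ∧ sineDist ρ ρ' ≤ δ), dMax ρ' σ

/-- Hypothesis testing divergence (base 2). -/
def dH (ε : ℝ) (ρ σ : Matrix n n ℂ) : EReal :=
  - elog (sInf {x : ℝ | ∃ T : Matrix n n ℂ,
      T.PosSemidef ∧ ((1 : Matrix n n ℂ) - T).PosSemidef ∧ 1 - ε ≤ rtr (T * ρ) ∧ x = rtr (T * σ)})

/-- The quantity `c_γ(ρ‖σ)`. -/
def cGamma (γ : ℝ) (ρ σ : Matrix n n ℂ) : EReal :=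
  ((γ⁻¹ : ℝ) : EReal) *
    elogE (epow2 ((γ : ℝ) * petzRenyi (1 + γ) ρ σ) +
           epow2 (((-γ : ℝ) : EReal) * petzRenyi (1 - γ) ρ σ) + 1)

/-- Binary entropy (base 2). -/
def binEnt (x : ℝ) : ℝ := -(x * Real.logb 2 x) - (1 - x) * Real.logb 2 (1 - x)

/-- Action of `id_k ⊗ Φ` on block matrices. -/
def blockApply {k : Type} (Φ : Matrix n n ℂ →ₗ[ℂ] Matrix m m ℂ)
    (M : Matrix (k × n) (k × n) ℂ) : Matrix (k × m) (k × m) ℂ :=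
  Matrix.of fun p q => Φ (Matrix.of fun a b => M (p.1, a) (q.1, b)) p.2 q.2

/-- Action of `Φ ⊗ id_k` on block matrices. -/
def blockApplyRight {k : Type} (Φ : Matrix n n ℂ →ₗ[ℂ] Matrix m m ℂ)
    (M : Matrix (n × k) (n × k) ℂ) : Matrix (m × k) (m × k) ℂ :=
  Matrix.of fun p q => Φ (Matrix.of fun a b => M (a, p.2) (b, q.2)) p.1 q.1

/-- Quantum channel: trace preserving and completely positive. -/
def IsQChannel (Φ : Matrix n n ℂ →ₗ[ℂ] Matrix m m ℂ) : Prop :=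
  (∀ M : Matrix n n ℂ, (Φ M).trace = M.trace) ∧
  (∀ k : ℕ, 1 ≤ k → ∀ M : Matrix (Fin k × n) (Fin k × n) ℂ, M.PosSemidef →
    (blockApply Φ M).PosSemidef)

/-- `id_k ⊗ Φ` as a linear map. -/
def blockApplyL (k : Type) (Φ : Matrix n n ℂ →ₗ[ℂ] Matrix m m ℂ) :
    Matrix (k × n) (k × n) ℂ →ₗ[ℂ] Matrix (k × m) (k × m) ℂ where
  toFun := blockApply Φ
  map_add' M N := by
    ext p q
    show Φ (Matrix.of fun a b => (M + N) (p.1, a) (q.1, b)) p.2 q.2 = _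
    have h : (Matrix.of fun a b => (M + N) (p.1, a) (q.1, b)) =
        (Matrix.of fun a b => M (p.1, a) (q.1, b)) +
          (Matrix.of fun a b => N (p.1, a) (q.1, b)) := rfl
    rw [h, map_add]
    rfl
  map_smul' c M := by
    ext p q
    show Φ (Matrix.of fun a b => (c • M) (p.1, a) (q.1, b)) p.2 q.2 = _
    have h : (Matrix.of fun a b => (c • M) (p.1, a) (q.1, b)) =
        c • (Matrix.of fun a b => M (p.1, a) (q.1, b)) := rfl
    rw [h, map_smul]
    rfl

/-- `Φ ⊗ id_k` as a linear map. -/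
def blockApplyRightL (k : Type) (Φ : Matrix n n ℂ →ₗ[ℂ] Matrix m m ℂ) :
    Matrix (n × k) (n × k) ℂ →ₗ[ℂ] Matrix (m × k) (m × k) ℂ where
  toFun := blockApplyRight Φ
  map_add' M N := by
    ext p q
    show Φ (Matrix.of fun a b => (M + N) (a, p.2) (b, q.2)) p.1 q.1 = _
    have h : (Matrix.of fun a b => (M + N) (a, p.2) (b, q.2)) =
        (Matrix.of fun a b => M (a, p.2) (b, q.2)) +
          (Matrix.of fun a b => N (a, p.2) (b, q.2)) := rfl
    rw [h, map_add]
    rfl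
  map_smul' c M := by
    ext p q
    show Φ (Matrix.of fun a b => (c • M) (a, p.2) (b, q.2)) p.1 q.1 = _
    have h : (Matrix.of fun a b => (c • M) (a, p.2) (b, q.2)) =
        c • (Matrix.of fun a b => M (a, p.2) (b, q.2)) := rfl
    rw [h, map_smul]
    rfl

/-- Tensor product of two channels (Kronecker product action). -/
def tensorChannel {n₁ m₁ n₂ m₂ : Type}
    (E₁ : Matrix n₁ n₁ ℂ →ₗ[ℂ] Matrix m₁ m₁ ℂ) (E₂ : Matrix n₂ n₂ ℂ →ₗ[ℂ] Matrix m₂ m₂ ℂ) :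
    Matrix (n₁ × n₂) (n₁ × n₂) ℂ →ₗ[ℂ] Matrix (m₁ × m₂) (m₁ × m₂) ℂ :=
  (blockApplyRightL m₂ E₁).comp (blockApplyL n₁ E₂)

/-- Index type for `k`-fold tensor powers. -/
def tpow (ι : Type) : ℕ → Type
  | 0 => PUnit
  | (k+1) => tpow ι k × ι

def tpowFintype (ι : Type) [Fintype ι] : ∀ k : ℕ, Fintype (tpow ι k)
  | 0 => inferInstanceAs (Fintype PUnit)
  | (k+1) => letI := tpowFintype ι k; inferInstanceAs (Fintype (tpow ι k × ι))

instance (ι : Type) [Fintype ι] (k : ℕ) : Fintype (tpow ι k) := tpowFintype ι k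

def tpowDecEq (ι : Type) [DecidableEq ι] : ∀ k : ℕ, DecidableEq (tpow ι k)
  | 0 => inferInstanceAs (DecidableEq PUnit)
  | (k+1) => letI := tpowDecEq ι k; inferInstanceAs (DecidableEq (tpow ι k × ι))

instance (ι : Type) [DecidableEq ι] (k : ℕ) : DecidableEq (tpow ι k) := tpowDecEq ι k

/-- `k`-fold Kronecker tensor power of a matrix. -/
def tpowMat (ρ : Matrix n n ℂ) : ∀ k : ℕ, Matrix (tpow n k) (tpow n k) ℂ
  | 0 => 1
  | (k+1) => (tpowMat ρ k) ⊗ₖ ρ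

/-- `k`-fold tensor power of a channel. -/
def tpowChannel (Φ : Matrix n n ℂ →ₗ[ℂ] Matrix m m ℂ) :
    ∀ k : ℕ, Matrix (tpow n k) (tpow n k) ℂ →ₗ[ℂ] Matrix (tpow m k) (tpow m k) ℂ
  | 0 => LinearMap.id
  | (k+1) => tensorChannel (tpowChannel Φ k) Φ

/-- Channel divergence induced by a divergence `𝔇` on states:
sup over `k ≥ 1` and input states `ν` on `ℂ^k ⊗ ℂ^d`. -/
def chDiv (𝔇 : ∀ (p : Type) [Fintype p] [DecidableEq p], Matrix p p ℂ → Matrix p p ℂ → EReal)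
    (E F : Matrix n n ℂ →ₗ[ℂ] Matrix m m ℂ) : EReal :=
  ⨆ (k : ℕ) (_ : 1 ≤ k) (ν : Matrix (Fin k × n) (Fin k × n) ℂ) (_ : IsState ν),
    𝔇 (Fin k × m) (blockApply E ν) (blockApply F ν)

/-- The geometric Rényi divergence as a divergence family. -/
def geomD (α : ℝ) : ∀ (p : Type) [Fintype p] [DecidableEq p],
    Matrix p p ℂ → Matrix p p ℂ → EReal :=
  fun _ _ _ => geomRenyi α

/-- The Umegaki relative entropy as a divergence family. -/
def relD : ∀ (p : Type) [Fintype p] [DecidableEq p],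
    Matrix p p ℂ → Matrix p p ℂ → EReal :=
  fun _ _ _ => relEntropy

/-- The hypothesis testing divergence as a divergence family. -/
def dHD (ε : ℝ) : ∀ (p : Type) [Fintype p] [DecidableEq p],
    Matrix p p ℂ → Matrix p p ℂ → EReal :=
  fun _ _ _ => dH ε

/-- Regularized channel relative entropy. -/
def regRelEntropy (E F : Matrix n n ℂ →ₗ[ℂ] Matrix m m ℂ) : EReal :=
  ⨆ (k : ℕ) (_ : 1 ≤ k),
    (((k : ℝ)⁻¹ : ℝ) : EReal) * chDiv relD (tpowChannel E k) (tpowChannel F k)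

end QCD


namespace QCD

open Matrix

section helpers

set_option linter.unusedSectionVars false

variable {n m : Type} [Fintype n] [DecidableEq n] [Fintype m] [DecidableEq m]

lemma matFun_eq {A : Matrix n n ℂ} (hA : A.IsHermitian) (f : ℝ → ℝ) :
    matFun f A = (hA.eigenvectorUnitary : Matrix n n ℂ) *
      Matrix.diagonal (fun i => (f (hA.eigenvalues i) : ℂ)) *
      (hA.eigenvectorUnitary : Matrix n n ℂ)ᴴ := by
  rw [matFun, dif_pos hA]; rfl

lemma eU_left {A : Matrix n n ℂ} (hA : A.IsHermitian) :
    (hA.eigenvectorUnitary : Matrix n n ℂ)ᴴ * (hA.eigenvectorUnitary : Matrix n n ℂ) = 1 :=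
  Unitary.coe_star_mul_self _

lemma eU_right {A : Matrix n n ℂ} (hA : A.IsHermitian) :
    (hA.eigenvectorUnitary : Matrix n n ℂ) * (hA.eigenvectorUnitary : Matrix n n ℂ)ᴴ = 1 :=
  Unitary.coe_mul_star_self _

lemma matFun_mul {A : Matrix n n ℂ} (hA : A.IsHermitian) (f g : ℝ → ℝ) :
    matFun f A * matFun g A = matFun (fun x => f x * g x) A := by
  rw [matFun_eq hA, matFun_eq hA, matFun_eq hA]
  set U := (hA.eigenvectorUnitary : Matrix n n ℂ) with hU
  have h : Uᴴ * U = 1 := eU_left hA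
  calc _ = U * diagonal (fun i => (f (hA.eigenvalues i) : ℂ)) * (Uᴴ * U) *
        diagonal (fun i => (g (hA.eigenvalues i) : ℂ)) * Uᴴ := by simp only [Matrix.mul_assoc]
    _ = _ := by
      rw [h, Matrix.mul_one, Matrix.mul_assoc U, diagonal_mul_diagonal]
      simp

lemma matFun_add {A : Matrix n n ℂ} (hA : A.IsHermitian) (f g : ℝ → ℝ) :
    matFun f A + matFun g A = matFun (fun x => f x + g x) A := by
  rw [matFun_eq hA, matFun_eq hA, matFun_eq hA, ← Matrix.add_mul, ← Matrix.mul_add,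
    diagonal_add]
  simp

lemma matFun_smul {A : Matrix n n ℂ} (hA : A.IsHermitian) (c : ℝ) (f : ℝ → ℝ) :
    (c : ℂ) • matFun f A = matFun (fun x => c * f x) A := by
  rw [matFun_eq hA, matFun_eq hA, ← Matrix.smul_mul, ← Matrix.mul_smul, ← diagonal_smul]
  congr 3
  ext i
  simp

lemma matFun_congr {A : Matrix n n ℂ} (hA : A.IsHermitian) {f g : ℝ → ℝ}
    (h : ∀ i, f (hA.eigenvalues i) = g (hA.eigenvalues i)) : matFun f A = matFun g A := by
  rw [matFun_eq hA, matFun_eq hA]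
  simp only [h]

lemma matFun_id {A : Matrix n n ℂ} (hA : A.IsHermitian) : matFun (fun x => x) A = A := by
  conv_rhs => rw [hA.spectral_theorem, Unitary.conjStarAlgAut_apply]
  rw [matFun_eq hA]
  rfl

lemma matFun_herm {A : Matrix n n ℂ} (hA : A.IsHermitian) (f : ℝ → ℝ) :
    (matFun f A)ᴴ = matFun f A := by
  rw [matFun_eq hA]
  simp only [conjTranspose_mul, conjTranspose_conjTranspose, diagonal_conjTranspose,
    Matrix.mul_assoc]
  congr 3
  ext i
  simp

/-- Basic data about a pair `ρ ≪ σ`. -/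
lemma supp_data {ρ σ : Matrix n n ℂ} (hρ : ρ.PosSemidef) (hσ : σ.PosSemidef)
    (h : SuppLE ρ σ) :
    ∃ S S' P T : Matrix n n ℂ, S' = mpow σ (-(1/2 : ℝ)) ∧ T = S' * ρ * S' ∧ Sᴴ = S ∧ S'ᴴ = S' ∧
      S * S = σ ∧ S * S' = P ∧ S' * S = P ∧ P * T = T ∧ T * P = T ∧ S * T * S = ρ ∧
      T.PosSemidef := by
  have hA := hσ.1
  have h0 := hσ.eigenvalues_nonneg
  let p : ℝ → ℝ := fun x => if x = 0 then 0 else 1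
  have key : ∀ x : ℝ, 0 ≤ x → √x * (if x = 0 then 0 else x ^ (-(1/2 : ℝ))) = p x := by
    intro x hx
    simp only [p]
    split_ifs with h
    · simp
    · have hx : 0 < x := lt_of_le_of_ne hx (Ne.symm h)
      rw [Real.sqrt_eq_rpow, ← Real.rpow_add hx]; norm_num
  have hSS' : msqrt σ * mpow σ (-(1/2 : ℝ)) = matFun p σ := by
    rw [msqrt, mpow, matFun_mul hA]
    exact matFun_congr hA (fun i => key _ (h0 i))
  have hS'S : mpow σ (-(1/2 : ℝ)) * msqrt σ = matFun p σ := by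
    rw [msqrt, mpow, matFun_mul hA]
    exact matFun_congr hA (fun i => by rw [mul_comm]; exact key _ (h0 i))
  have hPS' : matFun p σ * mpow σ (-(1/2 : ℝ)) = mpow σ (-(1/2 : ℝ)) := by
    rw [mpow, matFun_mul hA]
    exact matFun_congr hA (fun i => by simp only [p]; split_ifs <;> simp)
  have hS'P : mpow σ (-(1/2 : ℝ)) * matFun p σ = mpow σ (-(1/2 : ℝ)) := by
    rw [mpow, matFun_mul hA]
    exact matFun_congr hA (fun i => by simp only [p]; split_ifs <;> simp)
  have hσP : σ * matFun p σ = σ := by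
    have h1 := matFun_mul hA (fun x => x) p
    rw [matFun_id hA] at h1
    rw [h1]
    refine Eq.trans (matFun_congr hA (fun i => ?_)) (matFun_id hA)
    simp only [p]; split_ifs with h <;> simp [h]
  have hSS : msqrt σ * msqrt σ = σ := by
    conv_rhs => rw [← matFun_id hA]
    rw [msqrt, matFun_mul hA]
    exact matFun_congr hA (fun i => Real.mul_self_sqrt (h0 i))
  have hρP : ρ * matFun p σ = ρ := by
    have h1 : ρ * (matFun p σ - 1) = 0 := by
      ext i j
      have h2 : σ *ᵥ ((matFun p σ - 1).col j) = 0 := by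
        have : σ * (matFun p σ - 1) = 0 := by rw [Matrix.mul_sub, hσP, Matrix.mul_one, sub_self]
        ext k
        exact congrFun (congrFun this k) j
      exact congrFun (h _ h2) i
    rw [Matrix.mul_sub, Matrix.mul_one, sub_eq_zero] at h1
    exact h1
  have hPρ : matFun p σ * ρ = ρ := by
    have := congrArg conjTranspose hρP
    rwa [conjTranspose_mul, matFun_herm hA, hρ.1.eq] at this
  refine ⟨msqrt σ, mpow σ (-(1/2 : ℝ)), matFun p σ, _, rfl, rfl, matFun_herm hA _,
    matFun_herm hA _, hSS, hSS', hS'S, ?_, ?_, ?_, ?_⟩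
  · rw [← Matrix.mul_assoc, ← Matrix.mul_assoc, hPS']
  · rw [Matrix.mul_assoc, hS'P]
  · calc _ = (msqrt σ * mpow σ (-(1/2 : ℝ))) * ρ * (mpow σ (-(1/2 : ℝ)) * msqrt σ) := by
          simp only [Matrix.mul_assoc]
      _ = ρ := by rw [hSS', hS'S, hPρ, hρP]
  · have := hρ.mul_mul_conjTranspose_same (mpow σ (-(1/2 : ℝ)))
    rwa [show (mpow σ (-(1/2 : ℝ)))ᴴ = mpow σ (-(1/2 : ℝ)) from matFun_herm hA _] at this

lemma mpow_congr {T : Matrix n n ℂ} (hT : T.PosSemidef) {α : ℝ} (hα : 1 < α) :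
    mpow T α = matFun (fun x => x ^ α) T := by
  rw [mpow]
  refine matFun_congr hT.1 (fun i => ?_)
  split_ifs with h
  · rw [h, Real.zero_rpow (by linarith)]
  · rfl

/-- The quantity inside the logarithm. -/
def gQ (α : ℝ) (ρ σ : Matrix n n ℂ) : ℝ :=
  rtr (σ * mpow (mpow σ (-(1/2 : ℝ)) * ρ * mpow σ (-(1/2 : ℝ))) α)

lemma rtr_nonneg {A : Matrix n n ℂ} (hA : A.PosSemidef) : 0 ≤ rtr A :=
  (Complex.le_def.1 hA.trace_nonneg).1

lemma rtr_sum {ι : Type} (s : Finset ι) (A : ι → Matrix n n ℂ) :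
    rtr (∑ i ∈ s, A i) = ∑ i ∈ s, rtr (A i) := by
  simp [rtr, trace_sum]

lemma rtr_smul (c : ℝ) (A : Matrix n n ℂ) : rtr ((c : ℂ) • A) = c * rtr A := by
  simp [rtr, trace_smul]

lemma matFun_sandwich {T S : Matrix n n ℂ} (hT : T.IsHermitian) (hS : Sᴴ = S) :
    ∃ M : n → Matrix n n ℂ, (∀ i, (M i).PosSemidef) ∧
      ∀ f : ℝ → ℝ, S * matFun f T * S = ∑ i, (f (hT.eigenvalues i) : ℂ) • M i := by
  set U := (hT.eigenvectorUnitary : Matrix n n ℂ) with hU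
  refine ⟨fun i => (S * U) * diagonal (Pi.single i 1) * (S * U)ᴴ, fun i => ?_, fun f => ?_⟩
  · refine PosSemidef.mul_mul_conjTranspose_same (PosSemidef.diagonal ?_) _
    intro j
    by_cases h : j = i
    · subst h; simp
    · simp [h]
  · rw [matFun_eq hT]
    have : diagonal (fun i => (f (hT.eigenvalues i) : ℂ)) =
        ∑ i, (f (hT.eigenvalues i) : ℂ) • diagonal (Pi.single i 1) := by
      ext a b
      rw [Matrix.sum_apply]
      by_cases h : a = b
      · subst h
        simp [Pi.single_apply]
      · simp [h]
    rw [this, conjTranspose_mul, hS]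
    simp only [Matrix.mul_sum, Matrix.sum_mul, Matrix.mul_smul, Matrix.smul_mul, Matrix.mul_assoc]
    rfl

lemma rtr_sandwich {σ S X : Matrix n n ℂ} (hSS : S * S = σ) : rtr (σ * X) = rtr (S * X * S) := by
  rw [rtr, rtr, ← hSS, Matrix.trace_mul_comm (S * X) S, Matrix.mul_assoc]

lemma exists_decomp {α : ℝ} (hα : 1 < α) {ρ σ : Matrix n n ℂ} (hρ : ρ.PosSemidef)
    (hσ : σ.PosSemidef) (h : SuppLE ρ σ) :
    ∃ (l : n → ℝ) (M : n → Matrix n n ℂ), (∀ i, 0 ≤ l i) ∧ (∀ i, (M i).PosSemidef) ∧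
      σ = ∑ i, M i ∧ ρ = ∑ i, (l i : ℂ) • M i ∧ gQ α ρ σ = ∑ i, l i ^ α * rtr (M i) := by
  obtain ⟨S, S', P, T, hS', hTd, hS, hS'h, hSS, hSS', hS'S, hPT, hTP, hSTS, hT⟩ :=
    supp_data hρ hσ h
  obtain ⟨M, hM, hf⟩ := matFun_sandwich hT.1 hS
  refine ⟨hT.1.eigenvalues, M, hT.eigenvalues_nonneg, hM, ?_, ?_, ?_⟩
  · have h1 := hf (fun _ => 1)
    have h2 : matFun (fun _ => 1) T = 1 := by
      rw [matFun_eq hT.1]; simp [eU_right hT.1]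
    rw [h2, Matrix.mul_one, hSS] at h1
    simpa using h1
  · have h1 := hf (fun x => x)
    rwa [matFun_id hT.1, hSTS] at h1
  · rw [gQ, ← hS', ← hTd, mpow_congr hT hα, rtr_sandwich hSS, hf, rtr_sum]
    simp only [rtr_smul]

lemma quad_expand (C M : Matrix n n ℂ) (w c u s l d : ℂ) (hc : star c = c)
    (hw : w = u * l + s) (hlc : w * c = l) (hd : d = l * c) :
    w • ((c • (1 : Matrix n n ℂ) - C)ᴴ * M * (c • (1 : Matrix n n ℂ) - C)) =
      d • M - l • (Cᴴ * M) - l • (M * C) + u • (Cᴴ * (l • M) * C) + s • (Cᴴ * M * C) := by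
  subst hd
  simp only [conjTranspose_sub, conjTranspose_smul, hc, conjTranspose_one, Matrix.sub_mul,
    Matrix.mul_sub, Matrix.smul_mul, Matrix.mul_smul, Matrix.one_mul, Matrix.mul_one]
  linear_combination (norm := module) hlc • (c • M - Cᴴ * M - M * C) + hw • (Cᴴ * M * C)

lemma quad_ineq {ι : Type} [Fintype ι] {ρ σ : Matrix n n ℂ} (l : ι → ℝ)
    (M : ι → Matrix n n ℂ) (hl : ∀ i, 0 ≤ l i) (hM : ∀ i, (M i).PosSemidef)
    (hσ : σ = ∑ i, M i) (hρ : ρ = ∑ i, (l i : ℂ) • M i)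
    {S S' P T : Matrix n n ℂ} (hS : Sᴴ = S) (hS'h : S'ᴴ = S') (hSS : S * S = σ)
    (hSS' : S * S' = P) (hS'S : S' * S = P) (hPT : P * T = T) (hTP : T * P = T)
    (hSTS : S * T * S = ρ) (hT : T.PosSemidef) (u s : ℝ) (hu : 0 ≤ u) (hs : 0 < s) :
    rtr (S * matFun (fun t => t ^ 2 / (u * t + s)) T * S) ≤
      ∑ i, (l i) ^ 2 / (u * l i + s) * rtr (M i) := by
  have hA := hT.1
  have h0 := hT.eigenvalues_nonneg
  have hpos : ∀ t : ℝ, 0 ≤ t → 0 < u * t + s := fun t ht => by positivity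
  set B := matFun (fun t => t / (u * t + s)) T with hB
  have hBh : Bᴴ = B := matFun_herm hA _
  have hTB : T * B = matFun (fun t => t ^ 2 / (u * t + s)) T := by
    rw [hB]; conv_lhs => enter [1]; rw [← matFun_id hA]
    rw [matFun_mul hA]
    exact matFun_congr hA (fun i => by ring)
  have hBT : B * T = matFun (fun t => t ^ 2 / (u * t + s)) T := by
    rw [hB]; conv_lhs => enter [2]; rw [← matFun_id hA]
    rw [matFun_mul hA]
    exact matFun_congr hA (fun i => by ring)
  have hTg : T * matFun (fun t => 1 / (u * t + s)) T = B := by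
    conv_lhs => enter [1]; rw [← matFun_id hA]
    rw [matFun_mul hA]
    exact matFun_congr hA (fun i => by ring)
  have hPB : P * B = B := by rw [← hTg, ← Matrix.mul_assoc, hPT]
  have hlin : (u : ℂ) • (T * B) + (s : ℂ) • B = T := by
    conv_rhs => rw [← matFun_id hA]
    rw [hTB, hB, matFun_smul hA, matFun_smul hA, matFun_add hA]
    refine matFun_congr hA (fun i => ?_)
    have := hpos _ (h0 i)
    field_simp
  set C := S' * B * S with hC
  have hCh : Cᴴ = S * B * S' := by
    rw [hC, conjTranspose_mul, conjTranspose_mul, hS, hBh, hS'h, Matrix.mul_assoc]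
  set X := S * (T * B) * S with hX
  -- the three pieces
  have e1 : ρ * C = S * T * (P * B) * S := by
    rw [← hSTS, hC, ← hSS']; simp only [Matrix.mul_assoc]
  have e1' : ρ * C = X := by rw [e1, hPB, hX]; simp only [Matrix.mul_assoc]
  have hρh : ρᴴ = ρ := by
    rw [← hSTS, conjTranspose_mul, conjTranspose_mul, hS, hA.eq, Matrix.mul_assoc]
  have e2' : Cᴴ * ρ = X := by
    have := congrArg conjTranspose e1'
    rw [conjTranspose_mul, hρh] at this
    rw [this, hX, conjTranspose_mul, conjTranspose_mul, conjTranspose_mul, hS, hBh, hA.eq,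
      hBT, hTB, Matrix.mul_assoc]
  have e3 : Cᴴ * σ * C = S * B * (P * (P * B)) * S := by
    rw [hCh, hC, ← hSS, ← hS'S]
    conv_rhs => enter [1, 2, 2, 1]; rw [hS'S, ← hSS']
    simp only [Matrix.mul_assoc]
  have e3' : Cᴴ * σ * C = S * (B * B) * S := by
    rw [e3, hPB, hPB]; simp only [Matrix.mul_assoc]
  have e4 : Cᴴ * ρ * C = S * (B * (T * B)) * S := by
    rw [Matrix.mul_assoc, e1', hX, hCh]
    calc _ = S * (B * ((S' * S) * T * B)) * S := by simp only [Matrix.mul_assoc]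
      _ = _ := by rw [hS'S, hPT]
  have e5 : (u : ℂ) • (Cᴴ * ρ * C) + (s : ℂ) • (Cᴴ * σ * C) = X := by
    have h1 : X = S * (B * ((u : ℂ) • (T * B) + (s : ℂ) • B)) * S := by
      rw [hlin, hX, hTB, hBT]
    rw [e3', e4, h1]
    simp only [Matrix.mul_add, Matrix.add_mul, Matrix.mul_smul, Matrix.smul_mul]
  have hpsd : ∀ i, 0 ≤ rtr (((u * l i + s : ℝ) : ℂ) •
      (((((l i / (u * l i + s) : ℝ) : ℂ) • (1 : Matrix n n ℂ)) - C)ᴴ * M i *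
        ((((l i / (u * l i + s) : ℝ) : ℂ) • (1 : Matrix n n ℂ)) - C))) := by
    intro i
    rw [rtr_smul]
    exact mul_nonneg (hpos _ (hl i)).le (rtr_nonneg ((hM i).conjTranspose_mul_mul_same _))
  have hexp : ∀ i, ((u * l i + s : ℝ) : ℂ) •
      (((((l i / (u * l i + s) : ℝ) : ℂ) • (1 : Matrix n n ℂ)) - C)ᴴ * M i *
        ((((l i / (u * l i + s) : ℝ) : ℂ) • (1 : Matrix n n ℂ)) - C)) =
      (((l i) ^ 2 / (u * l i + s) : ℝ) : ℂ) • M i - (l i : ℂ) • (Cᴴ * M i) - (l i : ℂ) • (M i * C)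
        + (u : ℂ) • (Cᴴ * ((l i : ℂ) • M i) * C) + (s : ℂ) • (Cᴴ * M i * C) := by
    intro i
    have hc : ((u * l i + s : ℝ) : ℂ) * ((l i / (u * l i + s) : ℝ) : ℂ) = l i := by
      rw [← Complex.ofReal_mul]; congr 1; have := hpos _ (hl i); field_simp
    refine quad_expand _ _ _ _ _ _ _ _ (Complex.conj_ofReal _) (by push_cast; ring) hc ?_
    rw [← Complex.ofReal_mul]; congr 1; ring
  have hsum : 0 ≤ rtr (∑ i, ((((l i) ^ 2 / (u * l i + s) : ℝ) : ℂ) • M i - (l i : ℂ) • (Cᴴ * M i)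
        - (l i : ℂ) • (M i * C)
        + (u : ℂ) • (Cᴴ * ((l i : ℂ) • M i) * C) + (s : ℂ) • (Cᴴ * M i * C))) := by
    rw [rtr_sum]
    refine Finset.sum_nonneg (fun i _ => ?_)
    rw [← hexp]; exact hpsd i
  have hsum2 : (∑ i, ((((l i) ^ 2 / (u * l i + s) : ℝ) : ℂ) • M i - (l i : ℂ) • (Cᴴ * M i)
        - (l i : ℂ) • (M i * C)
        + (u : ℂ) • (Cᴴ * ((l i : ℂ) • M i) * C) + (s : ℂ) • (Cᴴ * M i * C))) =
      (∑ i, (((l i) ^ 2 / (u * l i + s) : ℝ) : ℂ) • M i) - X := by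
    simp only [Finset.sum_add_distrib, Finset.sum_sub_distrib]
    have a1 : ∑ i, (l i : ℂ) • (Cᴴ * M i) = X := by
      rw [← e2', hρ, Matrix.mul_sum]; simp only [Matrix.mul_smul]
    have a2 : ∑ i, (l i : ℂ) • (M i * C) = X := by
      rw [← e1', hρ, Matrix.sum_mul]; simp only [Matrix.smul_mul]
    have a3 : ∑ i, (u : ℂ) • (Cᴴ * ((l i : ℂ) • M i) * C) = (u : ℂ) • (Cᴴ * ρ * C) := by
      rw [hρ, Matrix.mul_sum, Matrix.sum_mul, Finset.smul_sum]
    have a4 : ∑ i, (s : ℂ) • (Cᴴ * M i * C) = (s : ℂ) • (Cᴴ * σ * C) := by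
      rw [hσ, Matrix.mul_sum, Matrix.sum_mul, Finset.smul_sum]
    rw [a1, a2, a3, a4, add_assoc, e5]
    abel
  rw [hsum2] at hsum
  have : rtr ((∑ i, (((l i) ^ 2 / (u * l i + s) : ℝ) : ℂ) • M i) - X) =
      (∑ i, (l i) ^ 2 / (u * l i + s) * rtr (M i)) - rtr X := by
    have : ∀ A B : Matrix n n ℂ, rtr (A - B) = rtr A - rtr B := by intro A B; simp [rtr]
    rw [this, rtr_sum]
    simp only [rtr_smul]
  rw [← hTB]
  linarith

open MeasureTheory in
lemma scalar_rpow_ineq {κ ι : Type} [Fintype κ] [Fintype ι] {α : ℝ} (hα : 1 < α ∧ α ≤ 2)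
    (t q : κ → ℝ) (l w : ι → ℝ) (ht : ∀ j, 0 ≤ t j) (hl : ∀ i, 0 ≤ l i)
    (H : ∀ u s : ℝ, 0 ≤ u → 0 < s →
      ∑ j, (t j) ^ 2 / (u * t j + s) * q j ≤ ∑ i, (l i) ^ 2 / (u * l i + s) * w i) :
    ∑ j, (t j) ^ α * q j ≤ ∑ i, (l i) ^ α * w i := by
  rcases eq_or_lt_of_le hα.2 with h2 | h2
  · subst h2
    have := H 0 1 le_rfl one_pos
    simpa using this
  · obtain ⟨μ, hμ⟩ := Real.exists_measure_rpow_eq_integral_rpowIntegrand₁₂ (p := α) ⟨hα.1, h2⟩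
    have e1 : ∑ j, (t j) ^ α * q j =
        ∫ s in Set.Ioi 0, ∑ j, Real.rpowIntegrand₁₂ α s (t j) * q j ∂μ := by
      rw [integral_finsetSum _ (fun j _ => (hμ _ (ht j)).1.mul_const _)]
      refine Finset.sum_congr rfl (fun j _ => ?_)
      rw [integral_mul_const, (hμ _ (ht j)).2]
    have e2 : ∑ i, (l i) ^ α * w i =
        ∫ s in Set.Ioi 0, ∑ i, Real.rpowIntegrand₁₂ α s (l i) * w i ∂μ := by
      rw [integral_finsetSum _ (fun j _ => (hμ _ (hl j)).1.mul_const _)]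
      refine Finset.sum_congr rfl (fun j _ => ?_)
      rw [integral_mul_const, (hμ _ (hl j)).2]
    rw [e1, e2]
    refine setIntegral_mono_on (integrable_finsetSum _ (fun j _ => (hμ _ (ht j)).1.mul_const _))
      (integrable_finsetSum _ (fun j _ => (hμ _ (hl j)).1.mul_const _)) measurableSet_Ioi ?_
    intro s hs
    have hs' : 0 < s := hs
    have key : ∀ x : ℝ, 0 ≤ x → Real.rpowIntegrand₁₂ α s x =
        s ^ (α - 1 - 1) * (x ^ 2 / (1 * x + s)) := by
      intro x hx
      rw [Real.rpowIntegrand₁₂_eq_mul_rpowIntegrand₀₁ hx hs',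
        Real.rpowIntegrand₀₁_eq_pow_div ⟨by linarith [hα.1], by linarith⟩ hs'.le hx]
      rw [one_mul, add_comm x s]; ring
    simp only [key _ (ht _), key _ (hl _), mul_assoc]
    rw [← Finset.mul_sum, ← Finset.mul_sum]
    exact mul_le_mul_of_nonneg_left (H 1 s zero_le_one hs') (Real.rpow_nonneg hs'.le _)

lemma psd_sum_smul {ι : Type} [Fintype ι] (l : ι → ℝ)
    (M : ι → Matrix n n ℂ) (hl : ∀ i, 0 ≤ l i) (hM : ∀ i, (M i).PosSemidef) :
    (∑ i, (l i : ℂ) • M i).PosSemidef :=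
  posSemidef_sum _ (fun i _ => (hM i).smul (by exact_mod_cast hl i))

lemma suppLE_of_decomp {ι : Type} [Fintype ι] (l : ι → ℝ)
    (M : ι → Matrix n n ℂ) (hM : ∀ i, (M i).PosSemidef) :
    SuppLE (∑ i, (l i : ℂ) • M i) (∑ i, M i) := by
  intro v hv
  have h1 : ∑ i, star v ⬝ᵥ (M i) *ᵥ v = 0 := by
    rw [← dotProduct_sum, ← Matrix.sum_mulVec, hv, dotProduct_zero]
  have h2 := (Finset.sum_eq_zero_iff_of_nonneg
    (fun i _ => (hM i).dotProduct_mulVec_nonneg v)).1 h1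
  rw [Matrix.sum_mulVec]
  refine Finset.sum_eq_zero (fun i hi => ?_)
  rw [Matrix.smul_mulVec, ((hM i).dotProduct_mulVec_zero_iff v).1 (h2 i hi), smul_zero]

/-- The geometric quantity is bounded by any classical preparation. -/
lemma gQ_le {ι : Type} [Fintype ι] {α : ℝ} (hα : 1 < α ∧ α ≤ 2) {ρ σ : Matrix n n ℂ} (l : ι → ℝ)
    (M : ι → Matrix n n ℂ) (hl : ∀ i, 0 ≤ l i) (hM : ∀ i, (M i).PosSemidef)
    (hσ : σ = ∑ i, M i) (hρ : ρ = ∑ i, (l i : ℂ) • M i) :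
    gQ α ρ σ ≤ ∑ i, l i ^ α * rtr (M i) := by
  have h : SuppLE ρ σ := by rw [hσ, hρ]; exact suppLE_of_decomp l M hM
  have hρp : ρ.PosSemidef := by rw [hρ]; exact psd_sum_smul l M hl hM
  have hσp : σ.PosSemidef := by rw [hσ]; exact posSemidef_sum _ (fun i _ => hM i)
  obtain ⟨S, S', P, T, hS', hTd, hS, hS'h, hSS, hSS', hS'S, hPT, hTP, hSTS, hT⟩ :=
    supp_data hρp hσp h
  obtain ⟨N, hN, hf⟩ := matFun_sandwich hT.1 hS
  rw [gQ, ← hS', ← hTd, mpow_congr hT hα.1, rtr_sandwich hSS, hf, rtr_sum]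
  simp only [rtr_smul]
  refine scalar_rpow_ineq hα _ (fun j => rtr (N j)) l (fun i => rtr (M i))
    hT.eigenvalues_nonneg hl ?_
  intro u s hu hs
  have := quad_ineq l M hl hM hσ hρ hS hS'h hSS hSS' hS'S hPT hTP hSTS hT u s hu hs
  rw [hf, rtr_sum] at this
  simpa only [rtr_smul] using this

lemma gQ_pos {α : ℝ} (hα : 1 < α) {ρ σ : Matrix n n ℂ} (hρ : ρ.PosSemidef)
    (hσ : σ.PosSemidef) (h : SuppLE ρ σ) (htr : ρ.trace ≠ 0) : 0 < gQ α ρ σ := by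
  obtain ⟨l, M, hl, hM, h1, h2, h3⟩ := exists_decomp hα hρ hσ h
  have hnn : ∀ i ∈ Finset.univ, 0 ≤ l i ^ α * rtr (M i) := fun i _ =>
    mul_nonneg (Real.rpow_nonneg (hl i) _) (rtr_nonneg (hM i))
  rw [h3]
  refine lt_of_le_of_ne (Finset.sum_nonneg hnn) (fun h0 => htr ?_)
  have h4 := (Finset.sum_eq_zero_iff_of_nonneg hnn).1 h0.symm
  have h5 : rtr ρ = 0 := by
    rw [h2, rtr_sum]
    refine Finset.sum_eq_zero (fun i hi => ?_)
    rw [rtr_smul]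
    rcases mul_eq_zero.1 (h4 i hi) with h6 | h6
    · rw [((Real.rpow_eq_zero (hl i) (by linarith)).1 h6), zero_mul]
    · rw [h6, mul_zero]
  have h6 := (Complex.le_def.1 hρ.trace_nonneg).2
  exact Complex.ext h5 h6.symm

/-- Contraction of the first tensor factor of `L` with `X`. -/
def contr {k : Type} [Fintype k] (L : Matrix (k × m) (k × m) ℂ) (X : Matrix k k ℂ) :
    Matrix m m ℂ :=
  Matrix.of fun x y => ∑ a, ∑ b, X a b * L (a, x) (b, y)

section contr
variable {k : Type} [Fintype k] [DecidableEq k]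

lemma contr_psd {L : Matrix (k × m) (k × m) ℂ} {X : Matrix k k ℂ} (hL : L.PosSemidef)
    (hX : X.PosSemidef) : (contr L X).PosSemidef := by
  obtain ⟨Y, hY⟩ : ∃ Y : Matrix k k ℂ, X = Yᴴ * Y := by
    open scoped MatrixOrder in
    exact CStarAlgebra.nonneg_iff_eq_star_mul_self.mp hX.nonneg
  let Z : k → Matrix (k × m) m ℂ := fun c => Matrix.of fun p y => if p.2 = y then Y c p.1 else 0
  have : contr L X = ∑ c, (Z c)ᴴ * L * Z c := by
    ext x y
    rw [Matrix.sum_apply]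
    have : ∀ c, ((Z c)ᴴ * L * Z c) x y =
        ∑ a, ∑ b, star (Y c a) * Y c b * L (a, x) (b, y) := by
      intro c
      simp only [Matrix.mul_apply, Z, conjTranspose_apply, Matrix.of_apply, Fintype.sum_prod_type]
      simp only [apply_ite, star_zero, ite_mul, zero_mul, mul_zero, mul_ite, Finset.sum_ite_eq,
        Finset.sum_ite_eq', Finset.mem_univ, if_true, Finset.sum_mul]
      rw [Finset.sum_comm]
      refine Finset.sum_congr rfl (fun a _ => Finset.sum_congr rfl (fun b _ => by ring))
    simp only [this, contr, Matrix.of_apply, hY, Matrix.mul_apply, conjTranspose_apply,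
      Finset.sum_mul]
    rw [Finset.sum_comm]
    conv_lhs => enter [2, b]; rw [Finset.sum_comm]
    rw [Finset.sum_comm]
    refine Finset.sum_congr rfl (fun c _ => ?_)
    rw [Finset.sum_comm]
  rw [this]
  exact posSemidef_sum _ (fun c _ => hL.conjTranspose_mul_mul_same _)

lemma contr_sum_left {ι : Type} [Fintype ι] (c : ι → ℂ) (L : ι → Matrix (k × m) (k × m) ℂ)
    (X : Matrix k k ℂ) : contr (∑ i, c i • L i) X = ∑ i, c i • contr (L i) X := by
  ext x y
  simp only [contr, Matrix.of_apply, Matrix.sum_apply, Matrix.smul_apply, smul_eq_mul,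
    Finset.mul_sum]
  conv_rhs => rw [Finset.sum_comm]; enter [2, a]; rw [Finset.sum_comm]
  refine Finset.sum_congr rfl (fun a _ => Finset.sum_congr rfl (fun b _ =>
    Finset.sum_congr rfl (fun i _ => by ring)))

lemma contr_sum_right {ι : Type} [Fintype ι] (c : ι → ℂ) (L : Matrix (k × m) (k × m) ℂ)
    (X : ι → Matrix k k ℂ) : contr L (∑ i, c i • X i) = ∑ i, c i • contr L (X i) := by
  ext x y
  simp only [contr, Matrix.of_apply, Matrix.sum_apply, Matrix.smul_apply, smul_eq_mul,
    Finset.mul_sum, Finset.sum_mul]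
  conv_rhs => rw [Finset.sum_comm]; enter [2, a]; rw [Finset.sum_comm]
  refine Finset.sum_congr rfl (fun a _ => Finset.sum_congr rfl (fun b _ =>
    Finset.sum_congr rfl (fun i _ => by ring)))

lemma trace_contr_one (L : Matrix (k × m) (k × m) ℂ) : (contr L 1).trace = L.trace := by
  simp only [Matrix.trace, Matrix.diag, contr, Matrix.of_apply, Matrix.one_apply, ite_mul,
    one_mul, zero_mul, Finset.sum_ite_eq, Finset.mem_univ, if_true, Fintype.sum_prod_type]
  rw [Finset.sum_comm]

/-- The purification-type input. -/
def pur (R : Matrix n k ℂ) : Matrix (k × n) (k × n) ℂ :=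
  vecMulVec (fun p => R p.2 p.1) (star (fun p : k × n => R p.2 p.1))

lemma contr_blockApply (Φ : Matrix n n ℂ →ₗ[ℂ] Matrix m m ℂ) (R : Matrix n k ℂ)
    (X : Matrix k k ℂ) : contr (blockApply Φ (pur R)) X = Φ (R * X * Rᴴ) := by
  have h : R * X * Rᴴ = ∑ a, ∑ b, X a b •
      (Matrix.of fun x y => pur R (a, x) (b, y) : Matrix n n ℂ) := by
    ext x y
    simp only [Matrix.mul_apply, Matrix.sum_apply, Matrix.smul_apply, Matrix.of_apply, pur,
      vecMulVec_apply, Pi.star_apply, conjTranspose_apply, smul_eq_mul, Finset.sum_mul]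
    rw [Finset.sum_comm]
    refine Finset.sum_congr rfl (fun a _ => Finset.sum_congr rfl (fun b _ => by ring))
  rw [h]
  ext x y
  simp only [map_sum, map_smul, Matrix.sum_apply, Matrix.smul_apply, smul_eq_mul]
  rfl

lemma pur_psd (R : Matrix n k ℂ) : (pur R).PosSemidef := posSemidef_vecMulVec_self_star _

lemma pur_trace (R : Matrix n k ℂ) : (pur R).trace = (R * Rᴴ).trace := by
  simp only [Matrix.trace, Matrix.diag, pur, vecMulVec_apply, Pi.star_apply, Matrix.mul_apply,
    conjTranspose_apply, Fintype.sum_prod_type]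
  rw [Finset.sum_comm]

lemma blockApply_trace {Φ : Matrix n n ℂ →ₗ[ℂ] Matrix m m ℂ}
    (h : ∀ M : Matrix n n ℂ, (Φ M).trace = M.trace) (ν : Matrix (k × n) (k × n) ℂ) :
    (blockApply Φ ν).trace = ν.trace := by
  have : ∀ a, ∑ x, Φ (Matrix.of fun i j => ν (a, i) (a, j)) x x = ∑ i, ν (a, i) (a, i) := by
    intro a
    exact h (Matrix.of fun i j => ν (a, i) (a, j))
  simp only [Matrix.trace, Matrix.diag, blockApply, Matrix.of_apply, Fintype.sum_prod_type, this]

end contr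

lemma exists_pd_factor {W : Matrix n n ℂ} (hW : W.PosDef) :
    ∃ R R' : Matrix n n ℂ, R * Rᴴ = W ∧ R * R' = 1 ∧ R' * R = 1 := by
  obtain ⟨Y, hY⟩ : ∃ Y : Matrix n n ℂ, W = Yᴴ * Y := by
    open scoped MatrixOrder in
    exact CStarAlgebra.nonneg_iff_eq_star_mul_self.mp hW.posSemidef.nonneg
  have h1 : Yᴴ * (Y * W⁻¹) = 1 := by
    rw [← Matrix.mul_assoc, ← hY]
    exact Matrix.mul_nonsing_inv _ ((Matrix.isUnit_iff_isUnit_det _).1 hW.isUnit)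
  exact ⟨Yᴴ, Y * W⁻¹, by rw [conjTranspose_conjTranspose, hY], h1, mul_eq_one_comm.1 h1⟩

lemma core {α : ℝ} (hα : 1 < α ∧ α ≤ 2) {dA dB : ℕ}
    (E F : Matrix (Fin dA) (Fin dA) ℂ →ₗ[ℂ] Matrix (Fin dB) (Fin dB) ℂ)
    (hE : IsQChannel E) (hF : IsQChannel F)
    (ρ σ : Matrix (Fin dA) (Fin dA) ℂ) (hρ : IsState ρ) (hσ : IsState σ) (hd : 1 ≤ dA)
    (hs : SuppLE ρ σ) (C : ℝ)
    (hC : ∀ ν : Matrix (Fin dA × Fin dA) (Fin dA × Fin dA) ℂ, IsState ν →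
      SuppLE (blockApply E ν) (blockApply F ν) ∧ gQ α (blockApply E ν) (blockApply F ν) ≤ C)
    (ε : ℝ) (hε : 0 < ε) :
    SuppLE (E ρ) (F σ) ∧ gQ α (E ρ) (F σ) ≤ (gQ α ρ σ + ε * dA) * C := by
  obtain ⟨l, M, hl, hM, hσM, hρM, hQ⟩ := exists_decomp hα.1 hρ.1 hσ.1 hs
  have hQpos : 0 < gQ α ρ σ := gQ_pos hα.1 hρ.1 hσ.1 hs (by rw [hρ.2]; exact one_ne_zero)
  have hd' : (1 : ℝ) ≤ dA := by exact_mod_cast hd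
  set s : ℝ := gQ α ρ σ + ε * dA with hsdef
  have hspos : 0 < s := by positivity
  have hsne : (s : ℂ) ≠ 0 := by exact_mod_cast hspos.ne'
  set W : Matrix (Fin dA) (Fin dA) ℂ := ∑ i, ((l i ^ α : ℝ) : ℂ) • M i with hW
  have hWp : W.PosSemidef := psd_sum_smul _ M (fun i => Real.rpow_nonneg (hl i) _) hM
  have hWtr : W.trace = (gQ α ρ σ : ℂ) := by
    have h1 : rtr W = gQ α ρ σ := by
      rw [hQ, hW, rtr_sum]; simp only [rtr_smul]
    have h2 := (Complex.le_def.1 hWp.trace_nonneg).2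
    exact Complex.ext h1 h2.symm
  have hWε : (W + (ε : ℂ) • (1 : Matrix (Fin dA) (Fin dA) ℂ)).PosDef :=
    PosDef.posSemidef_add hWp (PosDef.one.smul (by exact_mod_cast hε))
  have hAp : (((s⁻¹ : ℝ) : ℂ) • (W + (ε : ℂ) • (1 : Matrix (Fin dA) (Fin dA) ℂ))).PosDef :=
    hWε.smul (by exact_mod_cast inv_pos.2 hspos)
  obtain ⟨R, R', hRR, hRR', hR'R⟩ := exists_pd_factor hAp
  have hRR'h : R'ᴴ * Rᴴ = 1 := by rw [← conjTranspose_mul, hRR', conjTranspose_one]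
  have hR'Rh : Rᴴ * R'ᴴ = 1 := by rw [← conjTranspose_mul, hR'R, conjTranspose_one]
  have hback : ∀ Y : Matrix (Fin dA) (Fin dA) ℂ, R * (R' * Y * R'ᴴ) * Rᴴ = Y := by
    intro Y
    calc _ = (R * R') * Y * (R'ᴴ * Rᴴ) := by simp only [Matrix.mul_assoc]
      _ = Y := by rw [hRR', hRR'h, Matrix.one_mul, Matrix.mul_one]
  have hνs : IsState (pur R) := by
    refine ⟨pur_psd R, ?_⟩
    rw [pur_trace, hRR, trace_smul, trace_add, trace_smul, hWtr, trace_one]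
    simp only [Fintype.card_fin, smul_eq_mul]
    rw [hsdef]
    push_cast
    have : ((gQ α ρ σ : ℂ) + ε * dA) ≠ 0 := by rw [hsdef] at hsne; exact_mod_cast hsne
    exact inv_mul_cancel₀ this
  obtain ⟨hsν, hCν⟩ := hC _ hνs
  obtain ⟨μ, L, hμ, hL, hFL, hEL, hQν⟩ := exists_decomp hα.1 (hE.2 dA hd _ hνs.1)
    (hF.2 dA hd _ hνs.1) hsν
  let X : Fin dA → Matrix (Fin dA) (Fin dA) ℂ := fun i => R' * M i * R'ᴴ
  have hX : ∀ i, (X i).PosSemidef := fun i => (hM i).mul_mul_conjTranspose_same R'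
  let N : Fin dA × (Fin dA × Fin dB) → Matrix (Fin dB) (Fin dB) ℂ :=
    fun p => contr (L p.2) (X p.1)
  have hN : ∀ p, (N p).PosSemidef := fun p => contr_psd (hL _) (hX _)
  have hFσ : F σ = ∑ p, N p := by
    rw [Fintype.sum_prod_type, hσM, map_sum]
    refine Finset.sum_congr rfl (fun i _ => ?_)
    have h1 := contr_blockApply F R (X i)
    rw [hback, hFL] at h1
    have h2 := contr_sum_left (fun _ => 1) L (X i)
    simp only [one_smul] at h2
    rw [← h1, h2]
  have hEρ : E ρ = ∑ p, ((l p.1 * μ p.2 : ℝ) : ℂ) • N p := by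
    rw [Fintype.sum_prod_type, hρM, map_sum]
    refine Finset.sum_congr rfl (fun i _ => ?_)
    have h1 := contr_blockApply E R (X i)
    rw [hback, hEL, contr_sum_left] at h1
    rw [map_smul, ← h1, Finset.smul_sum]
    refine Finset.sum_congr rfl (fun j _ => ?_)
    rw [smul_smul, Complex.ofReal_mul]
  have hlm : ∀ p : Fin dA × (Fin dA × Fin dB), 0 ≤ l p.1 * μ p.2 :=
    fun p => mul_nonneg (hl _) (hμ _)
  refine ⟨?_, ?_⟩
  · rw [hFσ, hEρ]; exact suppLE_of_decomp _ N hN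
  have hub := gQ_le hα (fun p : Fin dA × (Fin dA × Fin dB) => l p.1 * μ p.2) N hlm hN hFσ hEρ
  have hWX : R' * W * R'ᴴ = ∑ i, ((l i ^ α : ℝ) : ℂ) • X i := by
    rw [hW, Matrix.mul_sum, Matrix.sum_mul]
    simp only [Matrix.mul_smul, Matrix.smul_mul, X]
  have hsplit : ∑ p : Fin dA × (Fin dA × Fin dB), (l p.1 * μ p.2) ^ α * rtr (N p) =
      ∑ j, μ j ^ α * rtr (contr (L j) (R' * W * R'ᴴ)) := by
    rw [Fintype.sum_prod_type, Finset.sum_comm]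
    refine Finset.sum_congr rfl (fun j _ => ?_)
    rw [hWX, contr_sum_right, rtr_sum, Finset.mul_sum]
    refine Finset.sum_congr rfl (fun i _ => ?_)
    rw [rtr_smul, Real.mul_rpow (hl _) (hμ _)]
    ring
  have hdom : ∀ j, rtr (contr (L j) (R' * W * R'ᴴ)) ≤ s * rtr (L j) := by
    intro j
    have hsW : (s : ℂ) • (R * Rᴴ) = W + (ε : ℂ) • (1 : Matrix (Fin dA) (Fin dA) ℂ) := by
      rw [hRR, smul_smul, Complex.ofReal_inv, mul_inv_cancel₀ hsne, one_smul]
    have h1 : (s : ℂ) • (1 : Matrix (Fin dA) (Fin dA) ℂ) =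
        R' * W * R'ᴴ + (ε : ℂ) • (R' * 1 * R'ᴴ) := by
      have h2 : R' * ((s : ℂ) • (R * Rᴴ)) * R'ᴴ = (s : ℂ) • 1 := by
        rw [Matrix.mul_smul, Matrix.smul_mul]
        congr 1
        calc _ = (R' * R) * (Rᴴ * R'ᴴ) := by simp only [Matrix.mul_assoc]
          _ = 1 := by rw [hR'R, hR'Rh, Matrix.one_mul]
      rw [← h2, hsW, Matrix.mul_add, Matrix.add_mul, Matrix.mul_smul, Matrix.smul_mul]
    have h3 := contr_sum_right (fun b : Bool => if b then (1 : ℂ) else (ε : ℂ)) (L j)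
      (fun b => if b then R' * W * R'ᴴ else R' * 1 * R'ᴴ)
    simp only [Fintype.sum_bool, if_true, one_smul, Bool.false_eq_true, if_false] at h3
    have h4 := contr_sum_right (fun _ : Unit => (s : ℂ)) (L j) (fun _ => 1)
    simp only [Finset.univ_unique, Finset.sum_singleton] at h4
    rw [← h1, h4] at h3
    have h5 := congrArg rtr h3
    have h6 : ∀ A B : Matrix (Fin dB) (Fin dB) ℂ, rtr (A + B) = rtr A + rtr B := by
      intro A B; simp [rtr]
    rw [rtr_smul, h6, rtr_smul] at h5
    have h7 : rtr (contr (L j) (1 : Matrix (Fin dA) (Fin dA) ℂ)) = rtr (L j) := by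
      rw [rtr, trace_contr_one, rtr]
    have h8 : 0 ≤ rtr (contr (L j) (R' * 1 * R'ᴴ)) :=
      rtr_nonneg (contr_psd (hL j) (PosSemidef.one.mul_mul_conjTranspose_same R'))
    rw [h7] at h5
    nlinarith [mul_nonneg hε.le h8]
  calc gQ α (E ρ) (F σ) ≤ _ := hub
    _ = _ := hsplit
    _ ≤ ∑ j, μ j ^ α * (s * rtr (L j)) := Finset.sum_le_sum (fun j _ =>
        mul_le_mul_of_nonneg_left (hdom j) (Real.rpow_nonneg (hμ j) _))
    _ = s * gQ α (blockApply E (pur R)) (blockApply F (pur R)) := by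
        rw [hQν, Finset.mul_sum]
        exact Finset.sum_congr rfl (fun j _ => by ring)
    _ ≤ s * C := mul_le_mul_of_nonneg_left hCν hspos.le

lemma core' {α : ℝ} (hα : 1 < α ∧ α ≤ 2) {dA dB : ℕ}
    (E F : Matrix (Fin dA) (Fin dA) ℂ →ₗ[ℂ] Matrix (Fin dB) (Fin dB) ℂ)
    (hE : IsQChannel E) (hF : IsQChannel F)
    (ρ σ : Matrix (Fin dA) (Fin dA) ℂ) (hρ : IsState ρ) (hσ : IsState σ) (hd : 1 ≤ dA)
    (hs : SuppLE ρ σ) (C : ℝ)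
    (hC : ∀ ν : Matrix (Fin dA × Fin dA) (Fin dA × Fin dA) ℂ, IsState ν →
      SuppLE (blockApply E ν) (blockApply F ν) ∧ gQ α (blockApply E ν) (blockApply F ν) ≤ C) :
    SuppLE (E ρ) (F σ) ∧ gQ α (E ρ) (F σ) ≤ gQ α ρ σ * C := by
  have h := core hα E F hE hF ρ σ hρ hσ hd hs C hC
  refine ⟨(h 1 one_pos).1, ?_⟩
  have hlim : Filter.Tendsto (fun ε : ℝ => (gQ α ρ σ + ε * dA) * C) (nhdsWithin 0 (Set.Ioi 0))
      (nhds (gQ α ρ σ * C)) := by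
    have : Continuous (fun ε : ℝ => (gQ α ρ σ + ε * dA) * C) := by fun_prop
    have h2 := this.tendsto 0
    simp only [zero_mul, add_zero] at h2
    exact h2.mono_left nhdsWithin_le_nhds
  refine ge_of_tendsto hlim ?_
  filter_upwards [self_mem_nhdsWithin] with ε hε using (h ε hε).2

lemma geomRenyi_of_supp {α : ℝ} {ρ σ : Matrix n n ℂ} (h : SuppLE ρ σ) (hQ : 0 < gQ α ρ σ) :
    geomRenyi α ρ σ = (((α - 1)⁻¹ * Real.logb 2 (gQ α ρ σ) : ℝ) : EReal) := by
  rw [geomRenyi, if_pos h]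
  change _ * elog (gQ α ρ σ) = _
  rw [elog, if_neg (not_le.2 hQ), EReal.coe_mul]

lemma geomRenyi_ne_bot {α : ℝ} (hα : 1 < α) {ρ σ : Matrix n n ℂ} (hρ : ρ.PosSemidef)
    (hσ : σ.PosSemidef) (htr : ρ.trace ≠ 0) : geomRenyi α ρ σ ≠ ⊥ := by
  by_cases h : SuppLE ρ σ
  · rw [geomRenyi_of_supp h (gQ_pos hα hρ hσ h htr)]
    exact EReal.coe_ne_bot _
  · rw [geomRenyi, if_neg h]; exact top_ne_bot

end helpers

/-- Chain rule for the geometric Rényi divergence. -/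
theorem geomRenyi_chain_rule {dA dB : ℕ} (α : ℝ) (hα : 1 < α ∧ α ≤ 2)
    (E F : Matrix (Fin dA) (Fin dA) ℂ →ₗ[ℂ] Matrix (Fin dB) (Fin dB) ℂ)
    (hE : IsQChannel E) (hF : IsQChannel F)
    (ρ σ : Matrix (Fin dA) (Fin dA) ℂ) (hρ : IsState ρ) (hσ : IsState σ) :
    geomRenyi α (E ρ) (F σ) ≤ geomRenyi α ρ σ + chDiv (geomD α) E F := by
  have hα1 : 0 < α - 1 := by linarith [hα.1]
  have hd : 1 ≤ dA := by
    rcases Nat.eq_zero_or_pos dA with h | h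
    · subst h
      have h1 := hρ.2
      simp [Matrix.trace] at h1
    · exact h
  have hρtr : ρ.trace ≠ 0 := by rw [hρ.2]; exact one_ne_zero
  have hle : ∀ ν : Matrix (Fin dA × Fin dA) (Fin dA × Fin dA) ℂ, IsState ν →
      geomRenyi α (blockApply E ν) (blockApply F ν) ≤ chDiv (geomD α) E F := by
    intro ν hν
    exact le_iSup₂_of_le dA hd (le_iSup₂_of_le ν hν le_rfl)
  have hEtr : ∀ ν : Matrix (Fin dA × Fin dA) (Fin dA × Fin dA) ℂ, IsState ν →
      (blockApply E ν).trace ≠ 0 := by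
    intro ν hν
    rw [blockApply_trace hE.1, hν.2]; exact one_ne_zero
  -- some state exists
  have hex : ∃ ν : Matrix (Fin dA × Fin dA) (Fin dA × Fin dA) ℂ, IsState ν := by
    let a : Fin dA × Fin dA := (⟨0, hd⟩, ⟨0, hd⟩)
    refine ⟨Matrix.diagonal (Pi.single a 1), PosSemidef.diagonal ?_, ?_⟩
    · intro j
      by_cases h : j = a
      · subst h; simp
      · simp [h]
    · simp
  have hDbot : chDiv (geomD α) E F ≠ ⊥ := by
    obtain ⟨ν, hν⟩ := hex
    intro h
    have h1 := hle ν hν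
    rw [h, le_bot_iff] at h1
    exact geomRenyi_ne_bot hα.1 (hE.2 dA hd _ hν.1) (hF.2 dA hd _ hν.1) (hEtr ν hν) h1
  by_cases hs : SuppLE ρ σ
  swap
  · have : geomRenyi α ρ σ = ⊤ := by rw [geomRenyi, if_neg hs]
    rw [this, EReal.top_add_of_ne_bot hDbot]
    exact le_top
  have hQ := gQ_pos hα.1 hρ.1 hσ.1 hs hρtr
  by_cases htop : chDiv (geomD α) E F = ⊤
  · rw [htop, geomRenyi_of_supp hs hQ, EReal.coe_add_top]
    exact le_top
  obtain ⟨D, hD⟩ : ∃ D : ℝ, chDiv (geomD α) E F = (D : EReal) :=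
    ⟨_, (EReal.coe_toReal htop hDbot).symm⟩
  rw [hD] at hle ⊢
  have hC : ∀ ν : Matrix (Fin dA × Fin dA) (Fin dA × Fin dA) ℂ, IsState ν →
      SuppLE (blockApply E ν) (blockApply F ν) ∧
        gQ α (blockApply E ν) (blockApply F ν) ≤ (2 : ℝ) ^ ((α - 1) * D) := by
    intro ν hν
    have h1 := hle ν hν
    by_cases hsν : SuppLE (blockApply E ν) (blockApply F ν)
    · refine ⟨hsν, ?_⟩
      have hQν := gQ_pos hα.1 (hE.2 dA hd _ hν.1) (hF.2 dA hd _ hν.1) hsν (hEtr ν hν)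
      rw [geomRenyi_of_supp hsν hQν, EReal.coe_le_coe_iff, inv_mul_le_iff₀ hα1] at h1
      exact (Real.logb_le_iff_le_rpow one_lt_two hQν).1 h1
    · rw [geomRenyi, if_neg hsν, top_le_iff] at h1
      exact absurd h1 (EReal.coe_ne_top D)
  obtain ⟨hsO, hO⟩ := core' hα E F hE hF ρ σ hρ hσ hd hs _ hC
  obtain ⟨hEp, hFp⟩ : (E ρ).PosSemidef ∧ (F σ).PosSemidef := by
    have aux : ∀ (Φ : Matrix (Fin dA) (Fin dA) ℂ →ₗ[ℂ] Matrix (Fin dB) (Fin dB) ℂ),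
        IsQChannel Φ → ∀ X : Matrix (Fin dA) (Fin dA) ℂ, X.PosSemidef → (Φ X).PosSemidef := by
      intro Φ hΦ X hX
      have h1 := hΦ.2 1 le_rfl (X.submatrix Prod.snd Prod.snd) (hX.submatrix _)
      exact h1.submatrix (fun x => ((0 : Fin 1), x))
    exact ⟨aux E hE ρ hρ.1, aux F hF σ hσ.1⟩
  have hQO := gQ_pos hα.1 hEp hFp hsO (by rw [hE.1]; exact hρtr)
  rw [geomRenyi_of_supp hs hQ, geomRenyi_of_supp hsO hQO, ← EReal.coe_add, EReal.coe_le_coe_iff]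
  have h2 : Real.logb 2 (gQ α (E ρ) (F σ)) ≤ Real.logb 2 (gQ α ρ σ) + (α - 1) * D := by
    have h3 := Real.logb_le_logb_of_le one_lt_two hQO hO
    rwa [Real.logb_mul hQ.ne' (Real.rpow_pos_of_pos two_pos _).ne',
      Real.logb_rpow two_pos (by norm_num)] at h3
  calc (α - 1)⁻¹ * Real.logb 2 (gQ α (E ρ) (F σ))
      ≤ (α - 1)⁻¹ * (Real.logb 2 (gQ α ρ σ) + (α - 1) * D) :=
        mul_le_mul_of_nonneg_left h2 (inv_nonneg.2 hα1.le)
    _ = (α - 1)⁻¹ * Real.logb 2 (gQ α ρ σ) + D := by field_simp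

end QCD
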